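/- Let a > 0 and let f : ℝ → ℝ be a Schwartz function. Then for every x ∈ ℝ, −(a/π)·∫_{−∞}^{∞} T_a(x − t)·f(t) dt = f(x) + (1/π)·∫_{−∞}^{∞} S_a(x − t)·f'(t) dt, where both convolution integrals converge absolutely. -/

import Mathlib

open Filter MeasureTheory Topology

/-- The sine integral `si(x) = -∫_x^∞ sin t / t dt`, defined via the improper
(limit of interval integrals) form. -/
noncomputable def si (x : ℝ) : ℝ :=
  - limUnder Filter.atTop (fun R : ℝ => ∫ t in x..R, Real.sin t / t)

/-- The cosine integral `ci(x) = -∫_x^∞ cos t / t dt`, defined via the improper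
(limit of interval integrals) form. -/
noncomputable def ci (x : ℝ) : ℝ :=
  - limUnder Filter.atTop (fun R : ℝ => ∫ t in x..R, Real.cos t / t)

/-- The kernel `S_a(x) = sign(x) (si(a|x|) cos(a|x|) - ci(a|x|) sin(a|x|))`, with `S_a(0)=0`. -/
noncomputable def Sker (a x : ℝ) : ℝ :=
  Real.sign x * (si (a * |x|) * Real.cos (a * |x|) - ci (a * |x|) * Real.sin (a * |x|))

/-- The kernel `T_a(x) = si(a|x|) sin(a|x|) + ci(a|x|) cos(a|x|)`. -/
noncomputable def Tker (a x : ℝ) : ℝ :=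
  si (a * |x|) * Real.sin (a * |x|) + ci (a * |x|) * Real.cos (a * |x|)

/-!
Integrating `sin t / t` and `cos t / t` by means of the Laplace transforms
`P(u) = ∫_0^∞ e^{-us} / (1 + s²) ds` and `Q(u) = ∫_0^∞ s e^{-us} / (1 + s²) ds`, which satisfy
`P' = -Q` and `Q' = P - 1 / u`, gives `S_a(y) = -sign(y) P(a|y|)` and `T_a(y) = -Q(a|y|)`. Hence
`S_a' = -a T_a` away from `0`, while `S_a` jumps there by `-2 P(0) = -π`: as distributions,
`S_a' = -a T_a - π δ`. Integrating the derivative of `t ↦ S_a(x - t) f(t)` on both sides of `x`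
turns this into the identity for `f`; no boundary term appears at infinity because `S_a` vanishes
there and `f`, having an integrable derivative, is bounded.
-/

section ImproperIntegrals

open Set

variable {E : Type*} [NormedAddCommGroup E]

theorem integrable_of_even {f : ℝ → E} (hf : f.Even) (hint : IntegrableOn f (Ioi 0)) :
    Integrable f := by
  have hneg : IntegrableOn f (Iio 0) := by
    rw [← neg_zero] at hint
    exact hint.comp_neg_Iio.congr_fun (fun y _ => hf y) measurableSet_Iio
  rw [← integrableOn_univ, ← Iic_union_Ioi (a := (0 : ℝ))]
  exact ((integrableOn_Iic_iff_integrableOn_Iio (by simp)).2 hneg).union hint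

variable [NormedSpace ℝ E] [CompleteSpace E] {F F' : ℝ → E}

theorem exists_norm_le_of_hasDerivAt_of_integrable (hF : ∀ t, HasDerivAt F (F' t) t)
    (hF' : Integrable F') : ∃ C, ∀ t, ‖F t‖ ≤ C := by
  refine ⟨‖F 0‖ + ∫ t, ‖F' t‖, fun t => ?_⟩
  have hftc : ∫ s in (0 : ℝ)..t, F' s = F t - F 0 :=
    intervalIntegral.integral_eq_sub_of_hasDerivAt (fun s _ => hF s) hF'.intervalIntegrable
  calc ‖F t‖ = ‖F 0 + ∫ s in (0 : ℝ)..t, F' s‖ := by rw [hftc, add_sub_cancel]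
    _ ≤ ‖F 0‖ + ‖∫ s in (0 : ℝ)..t, F' s‖ := norm_add_le _ _
    _ ≤ ‖F 0‖ + ∫ s in uIoc 0 t, ‖F' s‖ := by
      gcongr
      exact intervalIntegral.norm_integral_le_integral_norm_uIoc
    _ ≤ ‖F 0‖ + ∫ s, ‖F' s‖ := by
      gcongr ‖F 0‖ + ?_
      exact setIntegral_le_integral hF'.norm (Eventually.of_forall fun s => norm_nonneg _)

theorem tendsto_intervalIntegral_of_hasDerivAt {b : ℝ} {m : E}
    (hF : ∀ t ∈ Ici b, HasDerivAt F (F' t) t) (hF' : ContinuousOn F' (Ici b))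
    (hm : Tendsto F atTop (𝓝 m)) :
    Tendsto (fun R => ∫ t in b..R, F' t) atTop (𝓝 (m - F b)) := by
  refine (hm.sub_const (F b)).congr' ?_
  filter_upwards [eventually_ge_atTop b] with R hR
  have hsub : uIcc b R ⊆ Ici b := uIcc_of_le hR ▸ Icc_subset_Ici_self
  exact (intervalIntegral.integral_eq_sub_of_hasDerivAt (fun t ht => hF t (hsub ht))
    (hF'.mono hsub).intervalIntegrable).symm

theorem integral_of_hasDerivAt_of_jump {c : ℝ} {l r m n : E}
    (hF : ∀ t ≠ c, HasDerivAt F (F' t) t) (hF' : Integrable F')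
    (hl : Tendsto F (𝓝[<] c) (𝓝 l)) (hr : Tendsto F (𝓝[>] c) (𝓝 r))
    (hm : Tendsto F atBot (𝓝 m)) (hn : Tendsto F atTop (𝓝 n)) :
    ∫ t, F' t = (l - m) + (n - r) := by
  have hcont {t : ℝ} (ht : t ≠ c) (s : Set ℝ) : Tendsto F (𝓝[s] t) (𝓝 (F t)) :=
    (hF t ht).continuousAt.tendsto.mono_left nhdsWithin_le_nhds
  have hright : ∫ t in Ioi c, F' t = n - r := by
    have hb : c < c + 1 := lt_add_one c
    rw [← intervalIntegral.integral_interval_add_Ioi hF'.integrableOn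
        (hF'.integrableOn (s := Ioi (c + 1))),
      intervalIntegral.integral_eq_sub_of_hasDerivAt_of_tendsto hb (fun t ht => hF t ht.1.ne')
        hF'.intervalIntegrable hr (hcont hb.ne' _),
      integral_Ioi_of_hasDerivAt_of_tendsto' (fun t ht => hF t (hb.trans_le ht).ne')
        hF'.integrableOn hn]
    abel
  have hleft : ∫ t in Iic c, F' t = l - m := by
    have hb : c - 1 < c := sub_one_lt c
    rw [← sub_add_cancel (∫ t in Iic c, F' t) (∫ t in Iic (c - 1), F' t),
      intervalIntegral.integral_Iic_sub_Iic hF'.integrableOn hF'.integrableOn,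
      intervalIntegral.integral_eq_sub_of_hasDerivAt_of_tendsto hb (fun t ht => hF t ht.2.ne)
        hF'.intervalIntegrable (hcont hb.ne _) hl,
      integral_Iic_of_hasDerivAt_of_tendsto' (fun t ht => hF t (lt_of_le_of_lt ht hb).ne)
        hF'.integrableOn hm]
    abel
  rw [← intervalIntegral.integral_Iic_add_Ioi hF'.integrableOn hF'.integrableOn, hleft, hright]

end ImproperIntegrals

section AuxiliaryFunctions

open Real Set ProbabilityTheory

/-- The Laplace transform `∫_0^∞ s^n / (1 + s²) e^{-us} ds` in the variable `s = tan θ`, which makes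
it a moment integral over a finite measure. For `n = 0, 1` these are the auxiliary functions `f`
and `g` of the sine and cosine integrals (DLMF §6.2(iii)). -/
noncomputable def trigAux (n : ℕ) (u : ℝ) : ℝ :=
  ∫ θ in Ioo 0 (π / 2), tan θ ^ n * exp (-u * tan θ)

theorem tan_nonneg_of_mem_Ioo {θ : ℝ} (hθ : θ ∈ Ioo 0 (π / 2)) : 0 ≤ tan θ :=
  tan_nonneg_of_nonneg_of_le_pi_div_two hθ.1.le hθ.2.le

theorem exp_neg_mul_tan_le_one {u θ : ℝ} (hu : 0 ≤ u) (hθ : θ ∈ Ioo 0 (π / 2)) :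
    exp (-u * tan θ) ≤ 1 := by
  rw [neg_mul]
  exact exp_le_one_iff.2 (neg_nonpos.2 (mul_nonneg hu (tan_nonneg_of_mem_Ioo hθ)))

theorem measurable_exp_neg_mul_tan (u : ℝ) : Measurable fun θ => exp (-u * tan θ) := by
  have htan : Measurable tan := by
    simpa only [Pi.div_def, ← tan_eq_sin_div_cos] using measurable_sin.div measurable_cos
  fun_prop

theorem integrableOn_exp_neg_mul_tan {u : ℝ} (hu : 0 ≤ u) :
    IntegrableOn (fun θ => exp (-u * tan θ)) (Ioo 0 (π / 2)) := by
  refine Measure.integrableOn_of_bounded (M := 1) measure_Ioo_lt_top.ne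
    (measurable_exp_neg_mul_tan u).aestronglyMeasurable ?_
  refine ae_restrict_of_forall_mem measurableSet_Ioo fun θ hθ => ?_
  rw [norm_of_nonneg (exp_pos _).le]
  exact exp_neg_mul_tan_le_one hu hθ

theorem neg_mem_interior_integrableExpSet_tan {u : ℝ} (hu : 0 < u) :
    -u ∈ interior (integrableExpSet tan (volume.restrict (Ioo 0 (π / 2)))) := by
  refine interior_maximal (fun v hv => ?_) isOpen_Iio (show -u ∈ Iio 0 from neg_lt_zero.2 hu)
  simpa [integrableExpSet, IntegrableOn] using
    integrableOn_exp_neg_mul_tan (neg_nonneg.2 (le_of_lt hv))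

theorem integrableOn_tan_pow_mul_exp (n : ℕ) {u : ℝ} (hu : 0 < u) :
    IntegrableOn (fun θ => tan θ ^ n * exp (-u * tan θ)) (Ioo 0 (π / 2)) :=
  integrable_pow_mul_exp_of_mem_interior_integrableExpSet
    (neg_mem_interior_integrableExpSet_tan hu) n

theorem hasDerivAt_trigAux (n : ℕ) {u : ℝ} (hu : 0 < u) :
    HasDerivAt (trigAux n) (-trigAux (n + 1) u) u := by
  have h := (hasDerivAt_integral_pow_mul_exp_real (neg_mem_interior_integrableExpSet_tan hu) n).comp
    u (hasDerivAt_neg u)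
  exact h.congr_deriv (mul_neg_one _)

theorem trigAux_nonneg (n : ℕ) (u : ℝ) : 0 ≤ trigAux n u :=
  setIntegral_nonneg measurableSet_Ioo fun _ hθ =>
    mul_nonneg (pow_nonneg (tan_nonneg_of_mem_Ioo hθ) n) (exp_pos _).le

theorem hasDerivAt_neg_exp_neg_mul_tan_div {u θ : ℝ} (hu : u ≠ 0) (hθ : θ ∈ Ioo 0 (π / 2)) :
    HasDerivAt (fun θ => -exp (-u * tan θ) / u) ((1 + tan θ ^ 2) * exp (-u * tan θ)) θ := by
  have hcos : cos θ ≠ 0 := (cos_pos_of_mem_Ioo ⟨by linarith [hθ.1, pi_pos], hθ.2⟩).ne'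
  have hsec : 1 / cos θ ^ 2 = 1 + tan θ ^ 2 := by
    rw [← inv_one_add_tan_sq hcos, one_div, inv_inv]
  refine ((((hasDerivAt_tan hcos).const_mul (-u)).exp.neg).div_const u).congr_deriv ?_
  rw [hsec]
  field_simp

theorem integrableOn_one_add_tan_sq_mul_exp {u : ℝ} (hu : 0 < u) :
    IntegrableOn (fun θ => (1 + tan θ ^ 2) * exp (-u * tan θ)) (Ioo 0 (π / 2)) :=
  ((integrableOn_tan_pow_mul_exp 0 hu).add (integrableOn_tan_pow_mul_exp 2 hu)).congr_fun
    (fun θ _ => by simp only [Pi.add_apply, pow_zero, add_mul]) measurableSet_Ioo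

theorem integral_one_add_tan_sq_mul_exp {u : ℝ} (hu : 0 < u) :
    ∫ θ in Ioo 0 (π / 2), (1 + tan θ ^ 2) * exp (-u * tan θ) = 1 / u := by
  have hleft : Tendsto (fun θ => -exp (-u * tan θ) / u) (𝓝[>] 0) (𝓝 (-1 / u)) := by
    have htan : ContinuousAt tan 0 := continuousAt_tan.2 (by simp)
    have hcont : ContinuousAt (fun θ => -exp (-u * tan θ) / u) 0 := by fun_prop
    simpa using hcont.tendsto.mono_left nhdsWithin_le_nhds
  have hright : Tendsto (fun θ => -exp (-u * tan θ) / u) (𝓝[<] (π / 2)) (𝓝 0) := by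
    have hexp := tendsto_exp_atBot.comp
      (tendsto_tan_pi_div_two.const_mul_atTop_of_neg (neg_lt_zero.2 hu))
    simpa [Function.comp_def] using hexp.neg.div_const u
  rw [← integral_Ioc_eq_integral_Ioo, ← intervalIntegral.integral_of_le pi_div_two_pos.le,
    intervalIntegral.integral_eq_sub_of_hasDerivAt_of_tendsto pi_div_two_pos
      (fun θ hθ => hasDerivAt_neg_exp_neg_mul_tan_div hu.ne' hθ)
      ((intervalIntegrable_iff_integrableOn_Ioo_of_le pi_div_two_pos.le).2
        (integrableOn_one_add_tan_sq_mul_exp hu)) hleft hright]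
  ring

theorem trigAux_zero_add_trigAux_two {u : ℝ} (hu : 0 < u) :
    trigAux 0 u + trigAux 2 u = 1 / u := by
  rw [← integral_one_add_tan_sq_mul_exp hu, trigAux, trigAux,
    ← integral_add (integrableOn_tan_pow_mul_exp 0 hu) (integrableOn_tan_pow_mul_exp 2 hu)]
  simp only [pow_zero, add_mul]

theorem trigAux_le_one_div {n : ℕ} (hn : n ≤ 2) {u : ℝ} (hu : 0 < u) :
    trigAux n u ≤ 1 / u := by
  rw [← integral_one_add_tan_sq_mul_exp hu]
  refine setIntegral_mono_on (integrableOn_tan_pow_mul_exp n hu)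
    (integrableOn_one_add_tan_sq_mul_exp hu) measurableSet_Ioo fun θ _ => ?_
  have hpow : tan θ ^ n ≤ 1 + tan θ ^ 2 := by
    interval_cases n <;> nlinarith [sq_nonneg (tan θ), sq_nonneg (tan θ - 1)]
  exact mul_le_mul_of_nonneg_right hpow (exp_pos _).le

theorem tendsto_trigAux_atTop {n : ℕ} (hn : n ≤ 2) : Tendsto (trigAux n) atTop (𝓝 0) := by
  refine squeeze_zero' (Eventually.of_forall (trigAux_nonneg n)) ?_
    (tendsto_const_nhds.div_atTop tendsto_id : Tendsto (fun u : ℝ => 1 / u) atTop (𝓝 0))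
  filter_upwards [eventually_gt_atTop 0] with u hu using trigAux_le_one_div hn hu

theorem tendsto_trigAux_mul_atTop {n : ℕ} (hn : n ≤ 2) {g : ℝ → ℝ} {C : ℝ}
    (hg : ∀ u, |g u| ≤ C) : Tendsto (fun u => trigAux n u * g u) atTop (𝓝 0) :=
  (tendsto_trigAux_atTop hn).zero_mul_isBoundedUnder_le (isBoundedUnder_of ⟨C, hg⟩)

theorem trigAux_zero_apply_zero : trigAux 0 0 = π / 2 := by
  simp [trigAux, pi_div_two_pos.le]

theorem trigAux_zero_le {u : ℝ} (hu : 0 ≤ u) : trigAux 0 u ≤ π / 2 := by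
  rw [← trigAux_zero_apply_zero]
  simp only [trigAux, pow_zero, one_mul]
  refine setIntegral_mono_on (integrableOn_exp_neg_mul_tan hu)
    (integrableOn_exp_neg_mul_tan le_rfl) measurableSet_Ioo fun θ hθ => ?_
  simpa using exp_neg_mul_tan_le_one hu hθ

theorem continuousOn_trigAux_zero : ContinuousOn (trigAux 0) (Ici 0) := by
  intro u _
  unfold trigAux
  simp only [pow_zero, one_mul]
  refine continuousWithinAt_of_dominated (bound := fun _ => 1)
    (Eventually.of_forall fun v => (measurable_exp_neg_mul_tan v).aestronglyMeasurable) ?_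
    (integrable_const 1) (Eventually.of_forall fun θ => by fun_prop)
  filter_upwards [self_mem_nhdsWithin] with v hv
  refine ae_restrict_of_forall_mem measurableSet_Ioo fun θ hθ => ?_
  rw [norm_of_nonneg (exp_pos _).le]
  exact exp_neg_mul_tan_le_one hv hθ

theorem integrableOn_trigAux_one : IntegrableOn (trigAux 1) (Ioi 0) := by
  have h := integrableOn_Ioi_deriv_of_nonpos (continuousOn_trigAux_zero 0 self_mem_Ici)
    (fun u hu => hasDerivAt_trigAux 0 hu) (fun u _ => neg_nonpos.2 (trigAux_nonneg 1 u))
    (tendsto_trigAux_atTop zero_le_two)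
  exact integrable_neg_iff.1 h

theorem hasDerivAt_trigAux_one {u : ℝ} (hu : 0 < u) :
    HasDerivAt (trigAux 1) (trigAux 0 u - 1 / u) u := by
  refine (hasDerivAt_trigAux 1 hu).congr_deriv ?_
  linarith [trigAux_zero_add_trigAux_two hu]

theorem si_eq_trigAux {x : ℝ} (hx : 0 < x) :
    si x = -(trigAux 0 x * cos x + trigAux 1 x * sin x) := by
  have hderiv (u : ℝ) (hu : u ∈ Ici x) : HasDerivAt
      (fun v => -(trigAux 0 v * cos v + trigAux 1 v * sin v)) (sin u / u) u := by
    have hu0 : 0 < u := hx.trans_le hu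
    refine (((hasDerivAt_trigAux 0 hu0).mul (hasDerivAt_cos u)).add
      ((hasDerivAt_trigAux_one hu0).mul (hasDerivAt_sin u))).neg.congr_deriv ?_
    ring
  have hlim : Tendsto (fun v => -(trigAux 0 v * cos v + trigAux 1 v * sin v)) atTop (𝓝 0) := by
    simpa using ((tendsto_trigAux_mul_atTop zero_le_two abs_cos_le_one).add
      (tendsto_trigAux_mul_atTop one_le_two abs_sin_le_one)).neg
  have hcont : ContinuousOn (fun u => sin u / u) (Ici x) :=
    continuousOn_sin.div continuousOn_id fun u hu => (hx.trans_le hu).ne'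
  rw [si, (tendsto_intervalIntegral_of_hasDerivAt hderiv hcont hlim).limUnder_eq]
  ring

theorem ci_eq_trigAux {x : ℝ} (hx : 0 < x) :
    ci x = trigAux 0 x * sin x - trigAux 1 x * cos x := by
  have hderiv (u : ℝ) (hu : u ∈ Ici x) : HasDerivAt
      (fun v => trigAux 0 v * sin v - trigAux 1 v * cos v) (cos u / u) u := by
    have hu0 : 0 < u := hx.trans_le hu
    refine (((hasDerivAt_trigAux 0 hu0).mul (hasDerivAt_sin u)).sub
      ((hasDerivAt_trigAux_one hu0).mul (hasDerivAt_cos u))).congr_deriv ?_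
    ring
  have hlim : Tendsto (fun v => trigAux 0 v * sin v - trigAux 1 v * cos v) atTop (𝓝 0) := by
    simpa using (tendsto_trigAux_mul_atTop zero_le_two abs_sin_le_one).sub
      (tendsto_trigAux_mul_atTop one_le_two abs_cos_le_one)
  have hcont : ContinuousOn (fun u => cos u / u) (Ici x) :=
    continuousOn_cos.div continuousOn_id fun u hu => (hx.trans_le hu).ne'
  rw [ci, (tendsto_intervalIntegral_of_hasDerivAt hderiv hcont hlim).limUnder_eq]
  ring

end AuxiliaryFunctions

section Kernels

open Real Set

theorem Tker_even (a : ℝ) : (Tker a).Even := fun y => by simp only [Tker, abs_neg]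

theorem Sker_odd (a : ℝ) : (Sker a).Odd := fun y => by
  simp only [Sker, abs_neg, sign_neg, neg_mul]

variable {a : ℝ}

theorem Tker_of_pos (ha : 0 < a) {y : ℝ} (hy : 0 < y) : Tker a y = -trigAux 1 (a * y) := by
  rw [Tker, abs_of_pos hy, si_eq_trigAux (mul_pos ha hy), ci_eq_trigAux (mul_pos ha hy)]
  linear_combination -trigAux 1 (a * y) * sin_sq_add_cos_sq (a * y)

theorem Sker_of_pos (ha : 0 < a) {y : ℝ} (hy : 0 < y) : Sker a y = -trigAux 0 (a * y) := by
  rw [Sker, abs_of_pos hy, sign_of_pos hy, si_eq_trigAux (mul_pos ha hy),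
    ci_eq_trigAux (mul_pos ha hy)]
  linear_combination -trigAux 0 (a * y) * sin_sq_add_cos_sq (a * y)

theorem norm_Sker_le_trigAux (ha : 0 < a) (y : ℝ) : ‖Sker a y‖ ≤ trigAux 0 (a * |y|) := by
  wlog hy : 0 < y generalizing y
  · rcases (not_lt.1 hy).eq_or_lt with rfl | hy
    · simpa [Sker] using trigAux_nonneg 0 0
    · simpa [Sker_odd a y] using this (-y) (neg_pos.2 hy)
  rw [Sker_of_pos ha hy, abs_of_pos hy, norm_neg, norm_of_nonneg (trigAux_nonneg 0 _)]

theorem norm_Sker_le_pi_div_two (ha : 0 < a) (y : ℝ) : ‖Sker a y‖ ≤ π / 2 :=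
  (norm_Sker_le_trigAux ha y).trans (trigAux_zero_le (by positivity))

theorem tendsto_Sker_cocompact (ha : 0 < a) : Tendsto (Sker a) (cocompact ℝ) (𝓝 0) :=
  squeeze_zero_norm (norm_Sker_le_trigAux ha) ((tendsto_trigAux_atTop zero_le_two).comp
    (tendsto_norm_cocompact_atTop.const_mul_atTop ha))

theorem tendsto_Sker_nhdsGT_zero (ha : 0 < a) : Tendsto (Sker a) (𝓝[>] 0) (𝓝 (-(π / 2))) := by
  have hcont : ContinuousWithinAt (fun y => -trigAux 0 (a * y)) (Ici 0) 0 :=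
    ((continuousOn_trigAux_zero.comp (by fun_prop) fun _ hy => mul_nonneg ha.le hy).neg) 0
      self_mem_Ici
  have hlim : Tendsto (fun y => -trigAux 0 (a * y)) (𝓝[>] 0) (𝓝 (-(π / 2))) := by
    simpa [trigAux_zero_apply_zero] using (hcont.mono Ioi_subset_Ici_self).tendsto
  exact hlim.congr' (eventually_mem_nhdsWithin.mono fun y hy => (Sker_of_pos ha hy).symm)

theorem tendsto_Sker_nhdsLT_zero (ha : 0 < a) : Tendsto (Sker a) (𝓝[<] 0) (𝓝 (π / 2)) := by
  have hneg : Tendsto (fun y : ℝ => -y) (𝓝[<] 0) (𝓝[>] 0) := by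
    simpa using tendsto_neg_nhdsLT (a := (0 : ℝ))
  simpa [Function.comp_def, Sker_odd a _] using ((tendsto_Sker_nhdsGT_zero ha).comp hneg).neg

theorem hasDerivAt_Sker (ha : 0 < a) {y : ℝ} (hy : y ≠ 0) :
    HasDerivAt (Sker a) (-(a * Tker a y)) y := by
  wlog hpos : 0 < y generalizing y
  · have h := (this (neg_ne_zero.2 hy) (neg_pos.2 (hy.lt_of_le (not_lt.1 hpos)))).comp y
      (hasDerivAt_neg y)
    simpa [Function.comp_def, Pi.neg_def, Sker_odd a _, Tker_even a y] using h.neg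
  have hcomp : HasDerivAt (fun z => -trigAux 0 (a * z)) (a * trigAux 1 (a * y)) y := by
    refine ((hasDerivAt_trigAux 0 (mul_pos ha hpos)).comp y
      ((hasDerivAt_id y).const_mul a)).neg.congr_deriv ?_
    ring
  rw [Tker_of_pos ha hpos, mul_neg, neg_neg]
  exact hcomp.congr_of_eventuallyEq
    ((eventually_gt_nhds hpos).mono fun z hz => Sker_of_pos ha hz)

theorem measurable_Sker (ha : 0 < a) : Measurable (Sker a) :=
  measurable_of_continuousOn_compl_singleton 0 fun _ hy =>
    (hasDerivAt_Sker ha hy).continuousAt.continuousWithinAt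

theorem integrable_Tker (ha : 0 < a) : Integrable (Tker a) := by
  refine integrable_of_even (Tker_even a) ?_
  have h : IntegrableOn (fun y => trigAux 1 (a * y)) (Ioi 0) := by
    rw [integrableOn_Ioi_comp_mul_left_iff _ _ ha, mul_zero]
    exact integrableOn_trigAux_one
  exact h.neg.congr_fun (fun y hy => (Tker_of_pos ha hy).symm) measurableSet_Ioi

end Kernels

section Convolution

open Set

variable {E : Type*} [NormedAddCommGroup E] [NormedSpace ℝ E]
  {a : ℝ} {f f' : ℝ → E}

theorem integrable_Tker_sub_smul (ha : 0 < a) (hf : AEStronglyMeasurable f) {C : ℝ}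
    (hC : ∀ t, ‖f t‖ ≤ C) (x : ℝ) : Integrable fun t => Tker a (x - t) • f t :=
  ((integrable_Tker ha).comp_sub_left x).smul_bdd C hf (Eventually.of_forall hC)

theorem integrable_Sker_sub_smul (ha : 0 < a) (hf : Integrable f) (x : ℝ) :
    Integrable fun t => Sker a (x - t) • f t :=
  hf.bdd_smul (Real.pi / 2) ((measurable_Sker ha).comp (by fun_prop)).aestronglyMeasurable
    (Eventually.of_forall fun _ => norm_Sker_le_pi_div_two ha _)

theorem tendsto_Sker_sub_smul_cocompact (ha : 0 < a) {C : ℝ} (hC : ∀ t, ‖f t‖ ≤ C) (x : ℝ) :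
    Tendsto (fun t => Sker a (x - t) • f t) (cocompact ℝ) (𝓝 0) :=
  ((tendsto_Sker_cocompact ha).comp
    (Homeomorph.subLeft x).isClosedEmbedding.tendsto_cocompact).zero_smul_isBoundedUnder_le
    (isBoundedUnder_of ⟨C, hC⟩)

theorem tendsto_Sker_sub_smul_nhdsLT (ha : 0 < a) {x : ℝ} (hf : ContinuousAt f x) :
    Tendsto (fun t => Sker a (x - t) • f t) (𝓝[<] x) (𝓝 (-(Real.pi / 2) • f x)) := by
  have hsub : Tendsto (fun t => x - t) (𝓝[<] x) (𝓝[>] 0) := by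
    have hcont : ContinuousWithinAt (fun t => x - t) (Iio x) x := by fun_prop
    have hmaps : MapsTo (fun t => x - t) (Iio x) (Ioi 0) := fun t ht =>
      mem_Ioi.2 (sub_pos.2 ht)
    simpa only [sub_self] using hcont.tendsto_nhdsWithin hmaps
  exact ((tendsto_Sker_nhdsGT_zero ha).comp hsub).smul (hf.tendsto.mono_left nhdsWithin_le_nhds)

theorem tendsto_Sker_sub_smul_nhdsGT (ha : 0 < a) {x : ℝ} (hf : ContinuousAt f x) :
    Tendsto (fun t => Sker a (x - t) • f t) (𝓝[>] x) (𝓝 ((Real.pi / 2) • f x)) := by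
  have hsub : Tendsto (fun t => x - t) (𝓝[>] x) (𝓝[<] 0) := by
    have hcont : ContinuousWithinAt (fun t => x - t) (Ioi x) x := by fun_prop
    have hmaps : MapsTo (fun t => x - t) (Ioi x) (Iio 0) := fun t ht =>
      mem_Iio.2 (sub_neg.2 ht)
    simpa only [sub_self] using hcont.tendsto_nhdsWithin hmaps
  exact ((tendsto_Sker_nhdsLT_zero ha).comp hsub).smul (hf.tendsto.mono_left nhdsWithin_le_nhds)

theorem hasDerivAt_Sker_sub_smul (ha : 0 < a) {g : E} {x t : ℝ} (hxt : t ≠ x)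
    (hf : HasDerivAt f g t) :
    HasDerivAt (fun s => Sker a (x - s) • f s)
      (a • Tker a (x - t) • f t + Sker a (x - t) • g) t := by
  have hS : HasDerivAt (fun s => Sker a (x - s)) (a * Tker a (x - t)) t := by
    simpa using (hasDerivAt_Sker ha (sub_ne_zero.2 hxt.symm)).comp_const_sub x t
  refine (hS.smul hf).congr_deriv ?_
  rw [mul_smul, add_comm]

theorem stmt17_general [CompleteSpace E] (ha : 0 < a) (hf : ∀ t, HasDerivAt f (f' t) t)
    (hf' : Integrable f') (x : ℝ) :
    Integrable (fun t => Tker a (x - t) • f t) ∧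
    Integrable (fun t => Sker a (x - t) • f' t) ∧
    -(a / Real.pi) • ∫ t, Tker a (x - t) • f t
      = f x + (1 / Real.pi) • ∫ t, Sker a (x - t) • f' t := by
  obtain ⟨C, hC⟩ := exists_norm_le_of_hasDerivAt_of_integrable hf hf'
  have hcont : Continuous f := continuous_iff_continuousAt.2 fun t => (hf t).continuousAt
  have hT := integrable_Tker_sub_smul ha hcont.aestronglyMeasurable hC x
  have hS := integrable_Sker_sub_smul ha hf' x
  have hlim := tendsto_Sker_sub_smul_cocompact ha hC x
  have hjump : a • (∫ t, Tker a (x - t) • f t) + ∫ t, Sker a (x - t) • f' t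
      = -(Real.pi • f x) := by
    rw [← integral_smul, ← integral_add (f := fun t => a • Tker a (x - t) • f t) (hT.smul a) hS,
      integral_of_hasDerivAt_of_jump (fun t ht => hasDerivAt_Sker_sub_smul ha ht (hf t))
        ((hT.smul a).add hS) (tendsto_Sker_sub_smul_nhdsLT ha hcont.continuousAt)
        (tendsto_Sker_sub_smul_nhdsGT ha hcont.continuousAt)
        (hlim.mono_left atBot_le_cocompact) (hlim.mono_left atTop_le_cocompact)]
    module
  refine ⟨hT, hS, ?_⟩
  calc -(a / Real.pi) • ∫ t, Tker a (x - t) • f t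
      = -(1 / Real.pi) • a • ∫ t, Tker a (x - t) • f t := by module
    _ = -(1 / Real.pi) • (-(Real.pi • f x) - ∫ t, Sker a (x - t) • f' t) := by
      rw [eq_sub_of_add_eq hjump]
    _ = f x + (1 / Real.pi) • ∫ t, Sker a (x - t) • f' t := by
      match_scalars <;> field_simp

end Convolution

/-- for a Schwartz function `f`,
`-(a/π) ∫ T_a(x-t) f(t) dt = f(x) + (1/π) ∫ S_a(x-t) f'(t) dt`,
with both convolution integrals converging absolutely. -/
theorem stmt17 (a : ℝ) (ha : 0 < a) (f : SchwartzMap ℝ ℝ) (x : ℝ) :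
    Integrable (fun t : ℝ => Tker a (x - t) * f t) ∧
    Integrable (fun t : ℝ => Sker a (x - t) * deriv f t) ∧
    -(a / Real.pi) * ∫ t : ℝ, Tker a (x - t) * f t
      = f x + (1 / Real.pi) * ∫ t : ℝ, Sker a (x - t) * deriv f t := by
  simpa only [smul_eq_mul] using
    stmt17_general ha f.hasDerivAt (SchwartzMap.derivCLM ℝ ℝ f).integrable x
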